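/- Five-term functional equation for the additive dilogarithm ℓi₂ in characteristic p: Let k be a field of characteristic p ≥ 5, and define ℓi₂([s+at]) = −a³/(2s²(1−s)²) for s + at ∈ (k[t]/(t²))^♭. Then for x = s + at, y = u + bt in (k[t]/(t²))^♭ with x − y a unit, ℓi₂([x]) − ℓi₂([y]) + ℓi₂([y/x]) − ℓi₂([(1−x⁻¹)/(1−y⁻¹)]) + ℓi₂([(1−x)/(1−y)]) = 0. -/

import Mathlib

open TrivSqZeroExt

/-- The additive dilogarithm `ℓi₂` on `k₂ = k[t]/(t²)` (realized as dual
numbers): `ℓi₂(s + at) = −a³/(2s²(1−s)²)`. -/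
noncomputable def li2 {k : Type*} [Field k] (z : DualNumber k) : k :=
  -((snd z) ^ 3 / (2 * (fst z) ^ 2 * (1 - fst z) ^ 2))

theorem ringInverse_eq_inv {k : Type*} [Field k] {z : DualNumber k} (hz : fst z ≠ 0) :
    Ring.inverse z = z⁻¹ := by
  have h : z * z⁻¹ = 1 := TrivSqZeroExt.mul_inv_cancel hz
  simpa using (Ring.inverse_mul_eq_iff_eq_mul z 1 z⁻¹ (.of_mul_eq_one _ h)).2 h.symm

theorem fst_ringInverse {k : Type*} [Field k] {z : DualNumber k} (hz : fst z ≠ 0) :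
    fst (Ring.inverse z) = (fst z)⁻¹ := by
  rw [ringInverse_eq_inv hz, fst_inv]

theorem snd_ringInverse {k : Type*} [Field k] {z : DualNumber k} (hz : fst z ≠ 0) :
    snd (Ring.inverse z) = -(snd z / fst z ^ 2) := by
  rw [ringInverse_eq_inv hz, snd_inv]
  simp only [MulOpposite.smul_eq_mul_unop, MulOpposite.unop_op, smul_eq_mul]
  field_simp

theorem li2_mul_ringInverse {k : Type*} [Field k] (h2 : (2 : k) ≠ 0) {w z : DualNumber k}
    (hw : fst w ≠ 0) (hz : fst z ≠ 0) (hwz : fst z - fst w ≠ 0) :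
    li2 (w * Ring.inverse z) =
      -((snd w * fst z - fst w * snd z) ^ 3 /
        (2 * fst z ^ 2 * fst w ^ 2 * (fst z - fst w) ^ 2)) := by
  have h : 1 - fst w * (fst z)⁻¹ = (fst z - fst w) / fst z := by field_simp
  simp only [li2, fst_mul, DualNumber.snd_mul, fst_ringInverse hz, snd_ringInverse hz, h]
  field_simp
  ring

/-- Five-term functional equation for the additive dilogarithm `ℓi₂` in
characteristic `p ≥ 5`: for `x, y ∈ (k[t]/(t²))^♭` with `x − y` a unit,
`ℓi₂(x) − ℓi₂(y) + ℓi₂(y/x) − ℓi₂((1−x⁻¹)/(1−y⁻¹)) + ℓi₂((1−x)/(1−y)) = 0`. -/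
theorem li2_five_term (p : ℕ) [Fact p.Prime] (hp5 : 5 ≤ p)
    (k : Type*) [Field k] [CharP k p] (x y : DualNumber k)
    (hx0 : fst x ≠ 0) (hx1 : fst x ≠ 1) (hy0 : fst y ≠ 0) (hy1 : fst y ≠ 1)
    (hxy : fst x ≠ fst y) :
    li2 x - li2 y + li2 (y * Ring.inverse x) -
        li2 ((1 - Ring.inverse x) * Ring.inverse (1 - Ring.inverse y)) +
        li2 ((1 - x) * Ring.inverse (1 - y)) = 0 := by
  have h2 : (2 : k) ≠ 0 := by
    have := CharP.ringChar_of_prime_eq_zero (R := k) (Fact.out : p.Prime) (CharP.cast_eq_zero k p)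
    exact Ring.two_ne_zero (by omega)
  have hx1' : 1 - fst x ≠ 0 := sub_ne_zero.2 hx1.symm
  have hy1' : 1 - fst y ≠ 0 := sub_ne_zero.2 hy1.symm
  have hxy' : fst x - fst y ≠ 0 := sub_ne_zero.2 hxy
  have fst_one_sub_inv {z : DualNumber k} (hz : fst z ≠ 0) :
      fst (1 - Ring.inverse z) = (fst z - 1) / fst z := by
    rw [fst_sub, fst_one, fst_ringInverse hz]
    field_simp
  have hxi : fst (1 - Ring.inverse x) ≠ 0 := by
    rw [fst_one_sub_inv hx0]
    exact div_ne_zero (sub_ne_zero.2 hx1) hx0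
  have hyi : fst (1 - Ring.inverse y) ≠ 0 := by
    rw [fst_one_sub_inv hy0]
    exact div_ne_zero (sub_ne_zero.2 hy1) hy0
  have hsub : fst (1 - Ring.inverse y) - fst (1 - Ring.inverse x) =
      -(fst x - fst y) / (fst x * fst y) := by
    rw [fst_one_sub_inv hx0, fst_one_sub_inv hy0]
    field_simp
    ring
  have hyxi : fst (1 - Ring.inverse y) - fst (1 - Ring.inverse x) ≠ 0 := by
    rw [hsub]
    exact div_ne_zero (neg_ne_zero.2 hxy') (mul_ne_zero hx0 hy0)
  have hsub' : fst (1 - y) - fst (1 - x) = fst x - fst y := by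
    simp only [fst_sub, fst_one]
    ring
  rw [li2_mul_ringInverse h2 hy0 hx0 hxy', li2_mul_ringInverse h2 hxi hyi hyxi,
    li2_mul_ringInverse h2 (by simpa using hx1') (by simpa using hy1') (hsub' ▸ hxy'),
    hsub, hsub', fst_one_sub_inv hx0, fst_one_sub_inv hy0]
  simp only [li2, fst_sub, snd_sub, fst_one, snd_one, snd_ringInverse hx0, snd_ringInverse hy0]
  have hx2 : fst x - 1 = -(1 - fst x) := (neg_sub _ _).symm
  have hy2 : fst y - 1 = -(1 - fst y) := (neg_sub _ _).symm
  rw [hx2, hy2]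
  field_simp
  ring
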